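/- Let n ≥ 1 and take the explicit coefficients b(t) = e^t and g(t) = ½e^{−t} (so b(t)g(t) = ½ for all t). Then for every real σ there is a constant C > 0 such that every Fourier solution û with data û₀, û₁ satisfies for all t ≥ 0 (whenever the data integrals are finite): for σ ≥ 1, (∫_{ℝⁿ} |ξ|^{2σ}|û(t,ξ)|² dξ)^{1/2} ≤ C [ (∫ |ξ|^{2σ}|û₀|² dξ)^{1/2} + (∫ |ξ|^{2(σ+1)}|û₀|² dξ)^{1/2} + (∫ |ξ|^{2(σ−1)}|û₁|² dξ)^{1/2} + (∫ |ξ|^{2σ}|û₁|² dξ)^{1/2} ]; and for σ ≥ 0, (∫ |ξ|^{2σ}|∂ₜû(t,ξ)|² dξ)^{1/2} ≤ C [ (∫ |ξ|^{2(σ+1)}|û₀|² dξ)^{1/2} + (∫ |ξ|^{2(σ+2)}|û₀|² dξ)^{1/2} + (∫ |ξ|^{2σ}|û₁|² dξ)^{1/2} + (∫ |ξ|^{2(σ+1)}|û₁|² dξ)^{1/2} ]. -/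

import Mathlib

open MeasureTheory Filter

/-!
The argument is the energy method. At each frequency `ξ` the equation is a damped oscillator, whose
energy `‖û′‖² + ‖ξ‖²‖û‖²` has derivative `-2a‖û′‖²`, where `a = b + g‖ξ‖² ≥ 0` is the friction.
The energy therefore decreases; multiplying this inequality by a power of `‖ξ‖`, which may be split
freely off `ξ = 0`, and integrating gives both estimates with constant `1` and two data norms each.
-/

section DampedOscillator

variable {H : Type*} [NormedAddCommGroup H] [InnerProductSpace ℝ H]

/-- The function `f` solves the damped oscillator equation `f'' + ω² f + a f' = 0` on `[0, ∞)`, with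
frequency `ω` and time-dependent friction `a`. The derivatives are two-sided, also at time `0`. -/
structure IsDampedOscillation (ω : ℝ) (a : ℝ → ℝ) (f : ℝ → H) : Prop where
  differentiableAt : ∀ t, 0 ≤ t → DifferentiableAt ℝ f t
  differentiableAt_deriv : ∀ t, 0 ≤ t → DifferentiableAt ℝ (deriv f) t
  equation : ∀ t, 0 ≤ t → deriv (deriv f) t + ω ^ 2 • f t + a t • deriv f t = 0

/-- Twice the mechanical energy, kinetic plus potential, of an oscillator of unit mass and
frequency `ω` with trajectory `f`. -/
noncomputable def oscillatorEnergy (ω : ℝ) (f : ℝ → H) (t : ℝ) : ℝ :=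
  ‖deriv f t‖ ^ 2 + ω ^ 2 * ‖f t‖ ^ 2

variable {ω t : ℝ} {a : ℝ → ℝ} {f : ℝ → H}

lemma norm_deriv_sq_le_oscillatorEnergy : ‖deriv f t‖ ^ 2 ≤ oscillatorEnergy ω f t :=
  le_add_of_nonneg_right (by positivity)

lemma sq_mul_norm_sq_le_oscillatorEnergy : ω ^ 2 * ‖f t‖ ^ 2 ≤ oscillatorEnergy ω f t :=
  le_add_of_nonneg_left (by positivity)

lemma hasDerivAt_oscillatorEnergy (hf : DifferentiableAt ℝ f t)
    (hf' : DifferentiableAt ℝ (deriv f) t) :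
    HasDerivAt (oscillatorEnergy ω f)
      (2 * inner ℝ (deriv f t) (deriv (deriv f) t + ω ^ 2 • f t)) t := by
  refine (hf'.hasDerivAt.norm_sq.add (hf.hasDerivAt.norm_sq.const_mul (ω ^ 2))).congr_deriv ?_
  rw [inner_add_right, real_inner_smul_right, real_inner_comm (f t)]
  ring

namespace IsDampedOscillation

lemma hasDerivAt_oscillatorEnergy (hf : IsDampedOscillation ω a f) (ht : 0 ≤ t) :
    HasDerivAt (oscillatorEnergy ω f) (-(2 * a t * ‖deriv f t‖ ^ 2)) t := by
  refine (_root_.hasDerivAt_oscillatorEnergy (hf.differentiableAt t ht)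
    (hf.differentiableAt_deriv t ht)).congr_deriv ?_
  rw [eq_neg_of_add_eq_zero_left (hf.equation t ht), inner_neg_right, real_inner_smul_right,
    real_inner_self_eq_norm_sq]
  ring

lemma antitoneOn_oscillatorEnergy (hf : IsDampedOscillation ω a f) (ha : ∀ t, 0 ≤ t → 0 ≤ a t) :
    AntitoneOn (oscillatorEnergy ω f) (Set.Ici 0) := by
  have energy_deriv : ∀ t ∈ Set.Ici 0,
      HasDerivAt (oscillatorEnergy ω f) (-(2 * a t * ‖deriv f t‖ ^ 2)) t :=
    fun t ht ↦ hf.hasDerivAt_oscillatorEnergy ht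
  refine antitoneOn_of_hasDerivWithinAt_nonpos (convex_Ici 0)
    (fun t ht ↦ (energy_deriv t ht).continuousAt.continuousWithinAt)
    (fun t ht ↦ (energy_deriv t (interior_subset ht)).hasDerivWithinAt) fun t ht ↦ ?_
  have friction_nonneg : 0 ≤ a t := ha t (interior_subset ht)
  exact neg_nonpos.2 (by positivity)

lemma oscillatorEnergy_le (hf : IsDampedOscillation ω a f) (ha : ∀ t, 0 ≤ t → 0 ≤ a t)
    (ht : 0 ≤ t) : oscillatorEnergy ω f t ≤ oscillatorEnergy ω f 0 :=
  hf.antitoneOn_oscillatorEnergy ha Set.self_mem_Ici ht ht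

end IsDampedOscillation

end DampedOscillator

lemma aestronglyMeasurable_deriv_of_differentiableAt {X F : Type*} [MeasurableSpace X]
    {μ : Measure X} [NormedAddCommGroup F] [NormedSpace ℝ F] {u : ℝ → X → F} {t : ℝ}
    (hu : ∀ s, AEStronglyMeasurable (u s) μ)
    (hdiff : ∀ᵐ x ∂μ, DifferentiableAt ℝ (fun s ↦ u s x) t) :
    AEStronglyMeasurable (fun x ↦ deriv (fun s ↦ u s x) t) μ := by
  refine aestronglyMeasurable_of_tendsto_ae (nhdsWithin 0 (Set.Ioi 0))
    (f := fun h x ↦ h⁻¹ • (u (t + h) x - u t x))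
    (fun h ↦ ((hu (t + h)).sub (hu t)).const_smul h⁻¹) ?_
  filter_upwards [hdiff] with x hx
  exact hx.hasDerivAt.tendsto_slope_zero_right

lemma rpow_two_mul_add_one {r : ℝ} (hr : 0 < r) (σ : ℝ) :
    r ^ (2 * (σ + 1)) = r ^ (2 * σ) * r ^ 2 := by
  rw [mul_add, mul_one, Real.rpow_add hr, Real.rpow_two]

lemma sqrt_add_le_add_sqrt {x y : ℝ} (hx : 0 ≤ x) (hy : 0 ≤ y) : √(x + y) ≤ √x + √y := by
  simpa only [Real.sqrt_eq_rpow] using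
    Real.rpow_add_le_add_rpow hx hy one_half_pos.le one_half_lt_one.le

section HomogeneousSobolev

variable {E F F₀ F₁ : Type*} [NormedAddCommGroup E] [MeasurableSpace E]
  [NormedAddCommGroup F] [NormedAddCommGroup F₀] [NormedAddCommGroup F₁]

/-- The homogeneous Sobolev condition `|D|^σ v ∈ L²` on the Fourier side, for a function `v` of the
frequency; at `ξ = 0` the weight has the value of `Real.rpow`. Measurability is required only of the
weighted square. -/
def MemHomogeneousSobolev (μ : Measure E) (σ : ℝ) (v : E → F) : Prop :=
  Integrable (fun ξ ↦ ‖ξ‖ ^ (2 * σ) * ‖v ξ‖ ^ 2) μ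

/-- The homogeneous Sobolev norm `‖|D|^σ v‖_{L²}` on the Fourier side. Its value is `0` unless
`MemHomogeneousSobolev μ σ v`. -/
noncomputable def homogeneousSobolevNorm (μ : Measure E) (σ : ℝ) (v : E → F) : ℝ :=
  √(∫ ξ, ‖ξ‖ ^ (2 * σ) * ‖v ξ‖ ^ 2 ∂μ)

variable {μ : Measure E} {σ σ₀ σ₁ : ℝ} {v : E → F} {v₀ : E → F₀} {v₁ : E → F₁}

lemma MemHomogeneousSobolev.of_le_add [OpensMeasurableSpace E] (hv : AEStronglyMeasurable v μ)
    (h₀ : MemHomogeneousSobolev μ σ₀ v₀) (h₁ : MemHomogeneousSobolev μ σ₁ v₁)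
    (hle : ∀ᵐ ξ ∂μ, ‖ξ‖ ^ (2 * σ) * ‖v ξ‖ ^ 2 ≤
      ‖ξ‖ ^ (2 * σ₀) * ‖v₀ ξ‖ ^ 2 + ‖ξ‖ ^ (2 * σ₁) * ‖v₁ ξ‖ ^ 2) :
    MemHomogeneousSobolev μ σ v := by
  have weight_measurable : Measurable fun ξ : E ↦ ‖ξ‖ ^ (2 * σ) := by fun_prop
  refine (h₀.add h₁).mono' (weight_measurable.aestronglyMeasurable.mul (hv.norm.pow 2)) ?_
  filter_upwards [hle] with ξ hξ
  rwa [Real.norm_of_nonneg (by positivity)]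

lemma homogeneousSobolevNorm_le_add (h₀ : MemHomogeneousSobolev μ σ₀ v₀)
    (h₁ : MemHomogeneousSobolev μ σ₁ v₁)
    (hle : ∀ᵐ ξ ∂μ, ‖ξ‖ ^ (2 * σ) * ‖v ξ‖ ^ 2 ≤
      ‖ξ‖ ^ (2 * σ₀) * ‖v₀ ξ‖ ^ 2 + ‖ξ‖ ^ (2 * σ₁) * ‖v₁ ξ‖ ^ 2) :
    homogeneousSobolevNorm μ σ v ≤
      homogeneousSobolevNorm μ σ₀ v₀ + homogeneousSobolevNorm μ σ₁ v₁ := by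
  have integral_le : ∫ ξ, ‖ξ‖ ^ (2 * σ) * ‖v ξ‖ ^ 2 ∂μ ≤
      (∫ ξ, ‖ξ‖ ^ (2 * σ₀) * ‖v₀ ξ‖ ^ 2 ∂μ) + ∫ ξ, ‖ξ‖ ^ (2 * σ₁) * ‖v₁ ξ‖ ^ 2 ∂μ :=
    (integral_mono_of_nonneg (.of_forall fun ξ ↦ by positivity) (h₀.add h₁) hle).trans_eq
      (integral_add h₀ h₁)
  exact (Real.sqrt_le_sqrt integral_le).trans
    (sqrt_add_le_add_sqrt (integral_nonneg fun ξ ↦ by positivity)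
      (integral_nonneg fun ξ ↦ by positivity))

end HomogeneousSobolev

section DampedWave

variable {E H : Type*} [NormedAddCommGroup E] [NormedAddCommGroup H] [InnerProductSpace ℝ H]

/-- The function `u` of time and frequency is a Fourier solution of a wave equation with damping:
its mode at each frequency `ξ` solves `∂ₜ²u + ‖ξ‖² u + a(ξ, t) ∂ₜu = 0`. The friction `a` is the
symbol of the damping; it is `b(t) + g(t)‖ξ‖²` for the damping `b(t)∂ₜ - g(t)Δ∂ₜ`. -/
def IsDampedWave (a : E → ℝ → ℝ) (u : ℝ → E → H) : Prop :=
  ∀ ξ, IsDampedOscillation ‖ξ‖ (a ξ) fun s ↦ u s ξ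

variable {a : E → ℝ → ℝ} {u : ℝ → E → H} {ξ : E} {t : ℝ}

lemma isDampedWave_of_contDiff {u : ℝ → E → ℂ} (hsmooth : ∀ ξ, ContDiff ℝ 2 fun s ↦ u s ξ)
    (hode : ∀ ξ s, 0 ≤ s → deriv (deriv fun s ↦ u s ξ) s + ((‖ξ‖ ^ 2 : ℝ) : ℂ) * u s ξ +
      (a ξ s : ℂ) * deriv (fun s ↦ u s ξ) s = 0) :
    IsDampedWave a u := fun ξ ↦
  { differentiableAt := fun s _ ↦ (hsmooth ξ).differentiable two_ne_zero s
    differentiableAt_deriv := fun s _ ↦ (hsmooth ξ).differentiable_deriv_two s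
    equation := by simpa only [Complex.real_smul] using hode ξ }

namespace IsDampedWave

lemma rpow_mul_norm_deriv_sq_le (hu : IsDampedWave a u) (ha : ∀ ξ s, 0 ≤ s → 0 ≤ a ξ s)
    (ht : 0 ≤ t) (hξ : ξ ≠ 0) (σ : ℝ) :
    ‖ξ‖ ^ (2 * σ) * ‖deriv (fun s ↦ u s ξ) t‖ ^ 2 ≤
      ‖ξ‖ ^ (2 * (σ + 1)) * ‖u 0 ξ‖ ^ 2 + ‖ξ‖ ^ (2 * σ) * ‖deriv (fun s ↦ u s ξ) 0‖ ^ 2 := by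
  calc
    _ ≤ ‖ξ‖ ^ (2 * σ) * oscillatorEnergy ‖ξ‖ (fun s ↦ u s ξ) 0 := by
      gcongr
      exact norm_deriv_sq_le_oscillatorEnergy.trans ((hu ξ).oscillatorEnergy_le (ha ξ) ht)
    _ = _ := by
      rw [oscillatorEnergy, rpow_two_mul_add_one (norm_pos_iff.2 hξ)]
      ring

lemma rpow_mul_norm_sq_le (hu : IsDampedWave a u) (ha : ∀ ξ s, 0 ≤ s → 0 ≤ a ξ s)
    (ht : 0 ≤ t) (hξ : ξ ≠ 0) (σ : ℝ) :
    ‖ξ‖ ^ (2 * σ) * ‖u t ξ‖ ^ 2 ≤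
      ‖ξ‖ ^ (2 * σ) * ‖u 0 ξ‖ ^ 2 + ‖ξ‖ ^ (2 * (σ - 1)) * ‖deriv (fun s ↦ u s ξ) 0‖ ^ 2 := by
  have weight_eq : ‖ξ‖ ^ (2 * σ) = ‖ξ‖ ^ (2 * (σ - 1)) * ‖ξ‖ ^ 2 := by
    rw [← rpow_two_mul_add_one (norm_pos_iff.2 hξ), sub_add_cancel]
  calc
    _ = ‖ξ‖ ^ (2 * (σ - 1)) * (‖ξ‖ ^ 2 * ‖u t ξ‖ ^ 2) := by rw [weight_eq, mul_assoc]
    _ ≤ ‖ξ‖ ^ (2 * (σ - 1)) * oscillatorEnergy ‖ξ‖ (fun s ↦ u s ξ) 0 := by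
      gcongr
      exact sq_mul_norm_sq_le_oscillatorEnergy.trans ((hu ξ).oscillatorEnergy_le (ha ξ) ht)
    _ = _ := by
      rw [oscillatorEnergy, weight_eq]
      ring

end IsDampedWave

theorem overdamping_model_two_estimates_general [MeasurableSpace E] [OpensMeasurableSpace E]
    {μ : Measure E} (hμ : ∀ᵐ ξ ∂μ, ξ ≠ 0) (hu : IsDampedWave a u)
    (ha : ∀ ξ s, 0 ≤ s → 0 ≤ a ξ s) (hmeas : ∀ s, AEStronglyMeasurable (u s) μ) (ht : 0 ≤ t)
    (σ : ℝ) :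
    (MemHomogeneousSobolev μ σ (u 0) →
      MemHomogeneousSobolev μ (σ - 1) (fun ξ ↦ deriv (fun s ↦ u s ξ) 0) →
      MemHomogeneousSobolev μ σ (u t) ∧
      homogeneousSobolevNorm μ σ (u t) ≤ homogeneousSobolevNorm μ σ (u 0) +
        homogeneousSobolevNorm μ (σ - 1) (fun ξ ↦ deriv (fun s ↦ u s ξ) 0)) ∧
    (MemHomogeneousSobolev μ (σ + 1) (u 0) →
      MemHomogeneousSobolev μ σ (fun ξ ↦ deriv (fun s ↦ u s ξ) 0) →
      MemHomogeneousSobolev μ σ (fun ξ ↦ deriv (fun s ↦ u s ξ) t) ∧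
      homogeneousSobolevNorm μ σ (fun ξ ↦ deriv (fun s ↦ u s ξ) t) ≤
        homogeneousSobolevNorm μ (σ + 1) (u 0) +
        homogeneousSobolevNorm μ σ (fun ξ ↦ deriv (fun s ↦ u s ξ) 0)) := by
  have position_le := hμ.mono fun ξ hξ ↦ hu.rpow_mul_norm_sq_le ha ht hξ σ
  have velocity_le := hμ.mono fun ξ hξ ↦ hu.rpow_mul_norm_deriv_sq_le ha ht hξ σ
  have velocity_measurable := aestronglyMeasurable_deriv_of_differentiableAt hmeas
    (.of_forall fun ξ ↦ (hu ξ).differentiableAt t ht)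
  exact ⟨fun h₀ h₁ ↦ ⟨.of_le_add (hmeas t) h₀ h₁ position_le,
      homogeneousSobolevNorm_le_add h₀ h₁ position_le⟩,
    fun h₀ h₁ ↦ ⟨.of_le_add velocity_measurable h₀ h₁ velocity_le,
      homogeneousSobolevNorm_le_add h₀ h₁ velocity_le⟩⟩

end DampedWave

/-- Theorem 5.3 of the paper: the over-damping model with `b(t) = eᵗ` and
`g(t) = ½e^(-t)`, for which `b(t)g(t) = ½`. -/
theorem overdamping_model_two_estimates (n : ℕ) (hn : 1 ≤ n) :
    ∀ σ : ℝ, ∃ C : ℝ, 0 < C ∧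
        ∀ (uh : ℝ → EuclideanSpace ℝ (Fin n) → ℂ) (u₀ u₁ : EuclideanSpace ℝ (Fin n) → ℂ),
          Measurable (fun p : ℝ × EuclideanSpace ℝ (Fin n) => uh p.1 p.2) →
          (∀ ξ : EuclideanSpace ℝ (Fin n), ContDiff ℝ 2 (fun s => uh s ξ)) →
          (∀ (ξ : EuclideanSpace ℝ (Fin n)) (t : ℝ), 0 ≤ t →
            deriv (deriv (fun s => uh s ξ)) t + ((‖ξ‖ ^ 2 : ℝ) : ℂ) * uh t ξ +
              ((Real.exp t + (1 / 2) * Real.exp (-t) * ‖ξ‖ ^ 2 : ℝ) : ℂ) * deriv (fun s => uh s ξ) t = 0) →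
          (∀ ξ : EuclideanSpace ℝ (Fin n), uh 0 ξ = u₀ ξ) →
          (∀ ξ : EuclideanSpace ℝ (Fin n), deriv (fun s => uh s ξ) 0 = u₁ ξ) →
          ∀ t : ℝ, 0 ≤ t →
            Integrable (fun ξ : EuclideanSpace ℝ (Fin n) => ‖ξ‖ ^ (2 * σ) * ‖u₀ ξ‖ ^ 2) →
            Integrable (fun ξ : EuclideanSpace ℝ (Fin n) => ‖ξ‖ ^ (2 * (σ + 1)) * ‖u₀ ξ‖ ^ 2) →
            Integrable (fun ξ : EuclideanSpace ℝ (Fin n) => ‖ξ‖ ^ (2 * (σ + 2)) * ‖u₀ ξ‖ ^ 2) →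
            Integrable (fun ξ : EuclideanSpace ℝ (Fin n) => ‖ξ‖ ^ (2 * (σ - 1)) * ‖u₁ ξ‖ ^ 2) →
            Integrable (fun ξ : EuclideanSpace ℝ (Fin n) => ‖ξ‖ ^ (2 * σ) * ‖u₁ ξ‖ ^ 2) →
            Integrable (fun ξ : EuclideanSpace ℝ (Fin n) => ‖ξ‖ ^ (2 * (σ + 1)) * ‖u₁ ξ‖ ^ 2) →
            ((1 ≤ σ →
              Real.sqrt (∫ ξ : EuclideanSpace ℝ (Fin n), ‖ξ‖ ^ (2 * σ) * ‖uh t ξ‖ ^ 2) ≤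
                C * (Real.sqrt (∫ ξ : EuclideanSpace ℝ (Fin n), ‖ξ‖ ^ (2 * σ) * ‖u₀ ξ‖ ^ 2) + Real.sqrt (∫ ξ : EuclideanSpace ℝ (Fin n), ‖ξ‖ ^ (2 * (σ + 1)) * ‖u₀ ξ‖ ^ 2) +
                  Real.sqrt (∫ ξ : EuclideanSpace ℝ (Fin n), ‖ξ‖ ^ (2 * (σ - 1)) * ‖u₁ ξ‖ ^ 2) + Real.sqrt (∫ ξ : EuclideanSpace ℝ (Fin n), ‖ξ‖ ^ (2 * σ) * ‖u₁ ξ‖ ^ 2))) ∧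
            (0 ≤ σ →
              Real.sqrt (∫ ξ : EuclideanSpace ℝ (Fin n), ‖ξ‖ ^ (2 * σ) * ‖deriv (fun s => uh s ξ) t‖ ^ 2) ≤
                C * (Real.sqrt (∫ ξ : EuclideanSpace ℝ (Fin n), ‖ξ‖ ^ (2 * (σ + 1)) * ‖u₀ ξ‖ ^ 2) + Real.sqrt (∫ ξ : EuclideanSpace ℝ (Fin n), ‖ξ‖ ^ (2 * (σ + 2)) * ‖u₀ ξ‖ ^ 2) +
                  Real.sqrt (∫ ξ : EuclideanSpace ℝ (Fin n), ‖ξ‖ ^ (2 * σ) * ‖u₁ ξ‖ ^ 2) + Real.sqrt (∫ ξ : EuclideanSpace ℝ (Fin n), ‖ξ‖ ^ (2 * (σ + 1)) * ‖u₁ ξ‖ ^ 2)))) := by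
  refine fun σ ↦ ⟨1, one_pos, fun u u₀ u₁ hmeas hsmooth hode h₀ h₁ t ht i₁ i₂ _ i₃ i₄ _ ↦ ?_⟩
  obtain rfl : u 0 = u₀ := funext h₀
  obtain rfl : (fun ξ ↦ deriv (fun s ↦ u s ξ) 0) = u₁ := funext h₁
  have : Nonempty (Fin n) := ⟨⟨0, hn⟩⟩
  obtain ⟨position, velocity⟩ := overdamping_model_two_estimates_general (volume.ae_ne 0)
    (isDampedWave_of_contDiff hsmooth hode) (fun ξ s _ ↦ by positivity)
    (fun s ↦ hmeas.of_uncurry_left.aestronglyMeasurable) ht σ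
  have le_four_norms {x y z w : ℝ} (hy : 0 ≤ y) (hw : 0 ≤ w) : x + z ≤ 1 * (x + y + z + w) := by
    linarith
  exact ⟨fun _ ↦ (position i₁ i₃).2.trans (le_four_norms (by positivity) (by positivity)),
    fun _ ↦ (velocity i₂ i₄).2.trans (le_four_norms (by positivity) (by positivity))⟩
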